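/- Let Y₁,…,Yₙ be a hidden Markov chain on ℕ whose underlying Markov chain is (G,θ)-geometrically ergodic with 1 ≤ G < ∞ and 0 ≤ θ < 1. Then for any n ∈ ℕ and any f : ℕⁿ → ℝ that is 1-Lipschitz with respect to the Hamming metric, and any ε > 0, P(f(Y₁,…,Yₙ) − E f(Y₁,…,Yₙ) > nε) ≤ exp(−n(1−θ)²ε²/(2G²)), and the same bound holds for the lower tail P(E f − f > nε). -/

import Mathlib

open scoped BigOperators
open Filter

noncomputable section

/-- Total variation distance `‖μ − ν‖_TV = (1/2) ∑ₛ |μ(s) − ν(s)|`. -/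
def tv {α : Type*} (μ ν : α → ℝ) : ℝ := (1 / 2) * ∑' s, |μ s - ν s|

/-- Column-stochastic Markov kernel on ℕ: `A y x = A(y|x)`. -/
def IsKernel (A : ℕ → ℕ → ℝ) : Prop :=
  (∀ y x, 0 ≤ A y x) ∧ ∀ x, ∑' y, A y x = 1

/-- Stochastic vector on ℕ. -/
def IsStochastic (ξ : ℕ → ℝ) : Prop := (∀ x, 0 ≤ ξ x) ∧ ∑' x, ξ x = 1

/-- Kernel applied to a vector: `(Aξ)_y = ∑ₓ A(y|x) ξₓ`. -/
def kerApp (A : ℕ → ℕ → ℝ) (ξ : ℕ → ℝ) : ℕ → ℝ := fun y => ∑' x, A y x * ξ x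

/-- Iterated kernel application: `kerIter A s ξ = Aˢ ξ`. -/
def kerIter (A : ℕ → ℕ → ℝ) : ℕ → (ℕ → ℝ) → ℕ → ℝ
  | 0, ξ => ξ
  | s + 1, ξ => kerApp A (kerIter A s ξ)

/-- Point mass at `x`. -/
def dirac (x : ℕ) : ℕ → ℝ := fun y => if y = x then 1 else 0

/-- `(G,θ)`-geometric ergodicity of the kernel `A` with stationary distribution `π`:
`τ_{s+1} = sup_x ‖Aˢ δₓ − π‖_TV ≤ G θˢ` for all `s ≥ 0` (i.e. `τ_s ≤ G θ^{s-1}` for `s ≥ 1`),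
with `1 ≤ G` and `0 ≤ θ < 1`. -/
def IsGeomErgodic (A : ℕ → ℕ → ℝ) (π : ℕ → ℝ) (G θ : ℝ) : Prop :=
  1 ≤ G ∧ 0 ≤ θ ∧ θ < 1 ∧ IsStochastic π ∧ kerApp A π = π ∧
    ∀ (s x : ℕ), tv (kerIter A s (dirac x)) π ≤ G * θ ^ s

/-- Joint law of the Markov chain `(p₁, A)` on `ℕⁿ`. -/
def markovLaw (p : ℕ → ℝ) (A : ℕ → ℕ → ℝ) : (n : ℕ) → (Fin n → ℕ) → ℝ
  | 0, _ => 1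
  | n + 1, x => p (x 0) * ∏ i : Fin n, A (x i.succ) (x i.castSucc)

/-- Joint law of the hidden Markov chain `(p₁, A, B)` on `ℕⁿ`. -/
def hmmLaw (p : ℕ → ℝ) (A B : ℕ → ℕ → ℝ) (n : ℕ) (y : Fin n → ℕ) : ℝ :=
  ∑' x : Fin n → ℕ, markovLaw p A n x * ∏ i : Fin n, B (y i) (x i)

/-- Probability of an event under a law. -/
def prob {α : Type*} (μ : α → ℝ) (S : Set α) : ℝ := ∑' s : S, μ s.1

/-- Expectation of a function under a law. -/
def expect {α : Type*} (μ : α → ℝ) (f : α → ℝ) : ℝ := ∑' s, μ s * f s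

/-- Empirical distribution of a sample `Y ∈ ℕⁿ`. -/
def emp {n : ℕ} (Y : Fin n → ℕ) (v : ℕ) : ℝ :=
  (∑ i : Fin n, if Y i = v then (1 : ℝ) else 0) / n



/-- Probability mass function (real valued). -/
def IsDist {α : Type*} (μ : α → ℝ) : Prop := (∀ a, 0 ≤ μ a) ∧ HasSum μ 1

/-- Bounded real function. -/
def Bdd {α : Type*} (f : α → ℝ) : Prop := ∃ C, ∀ a, |f a| ≤ C

theorem IsStochastic.isDist {p : ℕ → ℝ} (h : IsStochastic p) : IsDist p := by
  refine ⟨h.1, ?_⟩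
  have hs : Summable p := by
    by_contra hn
    have := tsum_eq_zero_of_not_summable hn
    rw [h.2] at this
    exact one_ne_zero this
  have := hs.hasSum
  rwa [h.2] at this

theorem IsKernel.isDist {A : ℕ → ℕ → ℝ} (h : IsKernel A) (x : ℕ) :
    IsDist (fun y => A y x) :=
  IsStochastic.isDist ⟨fun y => h.1 y x, h.2 x⟩

theorem IsDist.le_one {α : Type*} {μ : α → ℝ} (h : IsDist μ) (a : α) : μ a ≤ 1 :=
  le_hasSum h.2 a (fun b _ => h.1 b)

theorem IsDist.summable_mul {α : Type*} {μ f : α → ℝ} (h : IsDist μ) (hf : Bdd f) :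
    Summable (fun a => μ a * f a) := by
  obtain ⟨C, hC⟩ := hf
  refine Summable.of_norm_bounded (g := fun a => μ a * C) (h.2.summable.mul_right C) ?_
  intro a
  rw [Real.norm_eq_abs, abs_mul, abs_of_nonneg (h.1 a)]
  exact mul_le_mul_of_nonneg_left (hC a) (h.1 a)

theorem expect_const {α : Type*} {μ : α → ℝ} (h : IsDist μ) (c : ℝ) :
    expect μ (fun _ => c) = c := by
  unfold expect
  rw [tsum_mul_right, h.2.tsum_eq, one_mul]

theorem expect_mono {α : Type*} {μ f g : α → ℝ} (h : IsDist μ) (hf : Bdd f) (hg : Bdd g)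
    (hfg : ∀ a, f a ≤ g a) : expect μ f ≤ expect μ g :=
  (h.summable_mul hf).tsum_le_tsum (fun a => mul_le_mul_of_nonneg_left (hfg a) (h.1 a))
    (h.summable_mul hg)

theorem expect_add {α : Type*} {μ f g : α → ℝ} (h : IsDist μ) (hf : Bdd f) (hg : Bdd g) :
    expect μ (fun a => f a + g a) = expect μ f + expect μ g := by
  unfold expect
  rw [← (h.summable_mul hf).tsum_add (h.summable_mul hg)]
  simp only [mul_add]

theorem expect_sub {α : Type*} {μ f g : α → ℝ} (h : IsDist μ) (hf : Bdd f) (hg : Bdd g) :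
    expect μ (fun a => f a - g a) = expect μ f - expect μ g := by
  unfold expect
  rw [← (h.summable_mul hf).tsum_sub (h.summable_mul hg)]
  simp only [mul_sub]

theorem expect_neg {α : Type*} (μ f : α → ℝ) :
    expect μ (fun a => - f a) = - expect μ f := by
  unfold expect
  rw [← tsum_neg]
  simp only [mul_neg]

theorem expect_mul_const {α : Type*} (μ f : α → ℝ) (c : ℝ) :
    expect μ (fun a => f a * c) = expect μ f * c := by
  unfold expect
  rw [← tsum_mul_right]
  simp only [mul_assoc]

theorem expect_le {α : Type*} {μ f : α → ℝ} (h : IsDist μ) (hf : Bdd f) {c : ℝ}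
    (hc : ∀ a, f a ≤ c) : expect μ f ≤ c := by
  rw [← expect_const h c]
  exact expect_mono h hf ⟨|c|, fun _ => le_rfl⟩ hc

theorem le_expect {α : Type*} {μ f : α → ℝ} (h : IsDist μ) (hf : Bdd f) {c : ℝ}
    (hc : ∀ a, c ≤ f a) : c ≤ expect μ f := by
  rw [← expect_const h c]
  exact expect_mono h ⟨|c|, fun _ => le_rfl⟩ hf hc

theorem abs_expect_le {α : Type*} {μ f : α → ℝ} (h : IsDist μ) {C : ℝ}
    (hC : ∀ a, |f a| ≤ C) : |expect μ f| ≤ C :=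
  abs_le.2 ⟨le_expect h ⟨C, hC⟩ fun a => (abs_le.1 (hC a)).1,
    expect_le h ⟨C, hC⟩ fun a => (abs_le.1 (hC a)).2⟩

theorem bdd_expect {α β : Type*} {K : α → β → ℝ} (h : ∀ a, IsDist (K a)) {f : α → β → ℝ}
    {C : ℝ} (hC : ∀ a b, |f a b| ≤ C) : Bdd (fun a => expect (K a) (f a)) :=
  ⟨C, fun a => abs_expect_le (h a) (hC a)⟩

theorem joint_isDist {α β : Type*} {p : α → ℝ} {K : α → β → ℝ} (hp : IsDist p)
    (hK : ∀ a, IsDist (K a)) : IsDist (fun ab : α × β => p ab.1 * K ab.1 ab.2) := by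
  have h0 : ∀ ab : α × β, 0 ≤ p ab.1 * K ab.1 ab.2 :=
    fun ab => mul_nonneg (hp.1 _) ((hK _).1 _)
  have hs : Summable (fun ab : α × β => p ab.1 * K ab.1 ab.2) := by
    refine (summable_prod_of_nonneg (f := fun ab : α × β => p ab.1 * K ab.1 ab.2) h0).2 ?_
    refine ⟨fun x => ?_, ?_⟩
    · have := (hK x).2.summable.mul_left (p x)
      exact this
    have : (fun x => ∑' y, p x * K x y) = p := by
      funext x
      rw [tsum_mul_left, (hK x).2.tsum_eq, mul_one]
    show Summable (fun x => ∑' y, p x * K x y)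
    rw [this]
    exact hp.2.summable
  refine ⟨h0, ?_⟩
  have h1 : ∑' ab : α × β, p ab.1 * K ab.1 ab.2 = 1 := by
    rw [hs.tsum_prod]
    simp only [tsum_mul_left, (hK _).2.tsum_eq, mul_one, hp.2.tsum_eq]
  have := hs.hasSum
  rwa [h1] at this

theorem joint_expect {α β : Type*} {p : α → ℝ} {K : α → β → ℝ} (hp : IsDist p)
    (hK : ∀ a, IsDist (K a)) {f : α × β → ℝ} (hf : Bdd f) :
    expect (fun ab : α × β => p ab.1 * K ab.1 ab.2) f =
      expect p (fun a => expect (K a) (fun b => f (a, b))) := by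
  unfold expect
  rw [((joint_isDist hp hK).summable_mul hf).tsum_prod]
  simp only [mul_assoc, tsum_mul_left]

theorem mix_isDist {α β : Type*} {p : α → ℝ} {K : α → β → ℝ} (hp : IsDist p)
    (hK : ∀ a, IsDist (K a)) : IsDist (fun b => ∑' a, p a * K a b) := by
  have h := joint_isDist hp hK
  refine ⟨fun b => tsum_nonneg fun a => mul_nonneg (hp.1 _) ((hK _).1 _), ?_⟩
  have h2 : HasSum (fun ba : β × α => p ba.2 * K ba.2 ba.1) 1 :=
    (Equiv.prodComm β α).hasSum_iff.2 h.2
  exact h2.prod_fiberwise fun b => (h2.summable.prod_factor b).hasSum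

theorem mix_expect {α β : Type*} {p : α → ℝ} {K : α → β → ℝ} (hp : IsDist p)
    (hK : ∀ a, IsDist (K a)) {f : β → ℝ} (hf : Bdd f) :
    expect (fun b => ∑' a, p a * K a b) f = expect p (fun a => expect (K a) f) := by
  obtain ⟨C, hC⟩ := hf
  have h := joint_isDist hp hK
  have hb : Bdd (fun ab : α × β => f ab.2) := ⟨C, fun ab => hC _⟩
  rw [← joint_expect (f := fun ab : α × β => f ab.2) hp hK hb]
  have h1 := h.summable_mul hb
  have h2 : Summable (fun ba : β × α => p ba.2 * K ba.2 ba.1 * f ba.1) :=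
    (Equiv.prodComm β α).summable_iff.2 h1
  unfold expect
  rw [← (Equiv.prodComm β α).tsum_eq]
  simp only [Equiv.prodComm_apply, Prod.fst_swap, Prod.snd_swap]
  rw [h2.tsum_prod]
  simp only [tsum_mul_right]

theorem equiv_isDist {α β : Type*} (e : α ≃ β) {μ : β → ℝ} (h : IsDist (fun a => μ (e a))) :
    IsDist μ := by
  refine ⟨fun b => ?_, e.hasSum_iff.1 h.2⟩
  have := h.1 (e.symm b)
  simpa using this

theorem equiv_expect {α β : Type*} (e : α ≃ β) (μ f : β → ℝ) :
    expect μ f = expect (fun a => μ (e a)) (fun a => f (e a)) :=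
  (e.tsum_eq (fun b => μ b * f b)).symm

/-- Hoeffding's lemma for discrete laws. -/
theorem hoeffding_discrete {α : Type*} [Countable α] {q m : α → ℝ} (hq : IsDist q) {c : ℝ}
    (hm : ∀ a b, m a - m b ≤ c) (t : ℝ) :
    expect q (fun a => Real.exp (t * m a)) ≤
      Real.exp (t * expect q m + t ^ 2 * c ^ 2 / 8) := by
  let _ : MeasurableSpace α := ⊤
  have : DiscreteMeasurableSpace α := ⟨fun _ => trivial⟩
  have hne : Nonempty α := by
    by_contra hn
    rw [not_nonempty_iff] at hn
    have := hq.2.tsum_eq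
    simp at this
  have hc : 0 ≤ c := by
    obtain ⟨a⟩ := hne
    simpa using hm a a
  have hbdd : BddBelow (Set.range m) := by
    obtain ⟨a⟩ := hne
    refine ⟨m a - c, ?_⟩
    rintro _ ⟨b, rfl⟩
    linarith [hm a b]
  have hlo : ∀ a, (⨅ b, m b) ≤ m a := fun a => ciInf_le hbdd a
  have hhi : ∀ a, m a ≤ (⨅ b, m b) + c := by
    intro a
    have : m a - c ≤ ⨅ b, m b := le_ciInf fun b => by linarith [hm a b]
    linarith
  let P : PMF α := ⟨fun a => ENNReal.ofReal (q a), by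
    have h1 : ∑' a, ENNReal.ofReal (q a) = 1 := by
      rw [← ENNReal.ofReal_tsum_of_nonneg hq.1 hq.2.summable, hq.2.tsum_eq, ENNReal.ofReal_one]
    rw [← h1]
    exact ENNReal.summable.hasSum⟩
  have hP : ∀ a, (P a).toReal = q a := fun a => ENNReal.toReal_ofReal (hq.1 a)
  have hint : MeasureTheory.Integrable m P.toMeasure :=
    MeasureTheory.Integrable.of_mem_Icc (⨅ b, m b) ((⨅ b, m b) + c)
      (measurable_of_countable m).aemeasurable
      (Filter.Eventually.of_forall fun a => ⟨hlo a, hhi a⟩)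
  have hE : ∫ a, m a ∂P.toMeasure = expect q m := by
    rw [PMF.integral_eq_tsum _ _ hint]
    simp only [hP, smul_eq_mul, expect]
  have hsub := ProbabilityTheory.hasSubgaussianMGF_of_mem_Icc (μ := P.toMeasure) (X := m)
    (a := ⨅ b, m b) (b := (⨅ b, m b) + c) (measurable_of_countable m).aemeasurable
      (Filter.Eventually.of_forall fun a => ⟨hlo a, hhi a⟩)
  have h1 := hsub.mgf_le t
  have h2 := hsub.integrable_exp_mul t
  unfold ProbabilityTheory.mgf at h1
  rw [PMF.integral_eq_tsum _ _ h2] at h1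
  simp only [hP, smul_eq_mul, hE, add_sub_cancel_left] at h1
  have h3 : expect q (fun a => Real.exp (t * m a)) =
      (∑' a, q a * Real.exp (t * (m a - expect q m))) * Real.exp (t * expect q m) := by
    unfold expect
    rw [← tsum_mul_right]
    congr 1
    funext a
    rw [mul_assoc, ← Real.exp_add]
    ring_nf
  rw [h3]
  calc _ ≤ _ := mul_le_mul_of_nonneg_right h1 (Real.exp_pos _).le
    _ = _ := by
      rw [← Real.exp_add]
      congr 1
      push_cast
      rw [Real.norm_of_nonneg hc]
      ring

theorem markovLaw_cons (p : ℕ → ℝ) (A : ℕ → ℕ → ℝ) (n : ℕ) (x : ℕ) (s : Fin n → ℕ) :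
    markovLaw p A (n + 1) (Fin.cons x s) = p x * markovLaw (fun y => A y x) A n s := by
  cases n with
  | zero => simp [markovLaw]
  | succ n =>
    simp only [markovLaw, Fin.cons_zero, Fin.prod_univ_succ, Fin.cons_succ, Fin.castSucc_zero,
      ← Fin.succ_castSucc]

theorem markovLaw_isDist {A : ℕ → ℕ → ℝ} (hA : IsKernel A) (n : ℕ) :
    ∀ {p : ℕ → ℝ}, IsDist p → IsDist (markovLaw p A n) := by
  induction n with
  | zero =>
    intro p _
    refine ⟨fun _ => zero_le_one, ?_⟩
    have := hasSum_unique (fun _ : Fin 0 → ℕ => (1 : ℝ))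
    exact this
  | succ n ih =>
    intro p hp
    refine equiv_isDist (Fin.consEquiv (fun _ => ℕ)) ?_
    have h := joint_isDist hp (K := fun x => markovLaw (fun y => A y x) A n)
      (fun x => ih (hA.isDist x))
    convert h using 2 with z
    exact markovLaw_cons p A n z.1 z.2

theorem hmmLaw_cons {p : ℕ → ℝ} {A B : ℕ → ℕ → ℝ} (hp : IsDist p) (hA : IsKernel A)
    (hB : IsKernel B) (n : ℕ) (y : ℕ) (t : Fin n → ℕ) :
    hmmLaw p A B (n + 1) (Fin.cons y t) =
      ∑' x, p x * (B y x * hmmLaw (fun y => A y x) A B n t) := by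
  have hj := joint_isDist hp (K := fun x => markovLaw (fun y => A y x) A n)
      (fun x => markovLaw_isDist hA n (hA.isDist x))
  have hb : Bdd (fun z : ℕ × (Fin n → ℕ) => B y z.1 * ∏ i, B (t i) (z.2 i)) := by
    refine ⟨1, fun z => ?_⟩
    have h1 : 0 ≤ ∏ i, B (t i) (z.2 i) := Finset.prod_nonneg fun i _ => hB.1 _ _
    have h2 : ∏ i, B (t i) (z.2 i) ≤ 1 :=
      Finset.prod_le_one (fun i _ => hB.1 _ _) fun i _ => (hB.isDist _).le_one _
    rw [abs_of_nonneg (mul_nonneg (hB.1 _ _) h1)]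
    exact mul_le_one₀ ((hB.isDist _).le_one _) h1 h2
  have hs := hj.summable_mul hb
  unfold hmmLaw
  rw [← (Fin.consEquiv (fun _ => ℕ)).tsum_eq]
  have he : ∀ z : ℕ × (Fin n → ℕ),
      markovLaw p A (n + 1) (Fin.consEquiv (fun _ => ℕ) z) *
        ∏ i : Fin (n + 1), B ((Fin.cons y t : Fin (n + 1) → ℕ) i)
          ((Fin.consEquiv (fun _ => ℕ) z : Fin (n + 1) → ℕ) i) =
      p z.1 * markovLaw (fun y => A y z.1) A n z.2 * (B y z.1 * ∏ i, B (t i) (z.2 i)) := by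
    intro z
    rw [Fin.prod_univ_succ]
    show markovLaw p A (n + 1) (Fin.cons z.1 z.2) * _ = _
    rw [markovLaw_cons]
    rfl
  rw [tsum_congr he, hs.tsum_prod]
  refine tsum_congr fun x => ?_
  rw [← tsum_mul_left, ← tsum_mul_left]
  refine tsum_congr fun s => ?_
  ring

theorem step_isDist {α β : Type*} {p : α → ℝ} {q : β → ℝ} (hp : IsDist p) (hq : IsDist q) :
    IsDist (fun ab : α × β => p ab.1 * q ab.2) :=
  joint_isDist hp (K := fun _ => q) (fun _ => hq)

theorem hmmLaw_isDist {A B : ℕ → ℕ → ℝ} (hA : IsKernel A) (hB : IsKernel B) (n : ℕ) :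
    ∀ {p : ℕ → ℝ}, IsDist p → IsDist (hmmLaw p A B n) := by
  induction n with
  | zero =>
    intro p _
    have h1 : hmmLaw p A B 0 = fun _ => 1 := by
      funext y
      simp [hmmLaw, markovLaw]
    rw [h1]
    refine ⟨fun _ => zero_le_one, ?_⟩
    have := hasSum_unique (fun _ : Fin 0 → ℕ => (1 : ℝ))
    exact this
  | succ n ih =>
    intro p hp
    refine equiv_isDist (Fin.consEquiv (fun _ => ℕ)) ?_
    have h := mix_isDist hp
      (K := fun x (z : ℕ × (Fin n → ℕ)) => B z.1 x * hmmLaw (fun y => A y x) A B n z.2)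
      (fun x => step_isDist (hB.isDist x) (ih (hA.isDist x)))
    convert h using 2 with z
    exact hmmLaw_cons hp hA hB n z.1 z.2

theorem hmm_expect_succ {p : ℕ → ℝ} {A B : ℕ → ℕ → ℝ} (hp : IsDist p) (hA : IsKernel A)
    (hB : IsKernel B) (n : ℕ) {f : (Fin (n + 1) → ℕ) → ℝ} (hf : Bdd f) :
    expect (hmmLaw p A B (n + 1)) f =
      expect p (fun x => expect (fun y => B y x) (fun y =>
        expect (hmmLaw (fun y => A y x) A B n) (fun t => f (Fin.cons y t)))) := by
  obtain ⟨C, hC⟩ := hf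
  rw [equiv_expect (Fin.consEquiv (fun _ => ℕ))]
  have h1 : (fun z : ℕ × (Fin n → ℕ) => hmmLaw p A B (n + 1) (Fin.consEquiv (fun _ => ℕ) z)) =
      fun z => ∑' x, p x * (B z.1 x * hmmLaw (fun y => A y x) A B n z.2) := by
    funext z
    exact hmmLaw_cons hp hA hB n z.1 z.2
  have h1' := congrArg (fun q => expect q (fun z : ℕ × (Fin n → ℕ) => f (Fin.cons z.1 z.2))) h1
  refine h1'.trans ?_
  show expect (fun z : ℕ × (Fin n → ℕ) => ∑' x, p x * (B z.1 x * hmmLaw (fun y => A y x) A B n z.2)) _ = _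
  rw [mix_expect hp
      (K := fun x (z : ℕ × (Fin n → ℕ)) => B z.1 x * hmmLaw (fun y => A y x) A B n z.2)
      (fun x => step_isDist (hB.isDist x) (hmmLaw_isDist hA hB n (hA.isDist x)))
      ⟨C, fun z => hC _⟩]
  congr 1
  funext x
  exact joint_expect (K := fun _ => hmmLaw (fun y => A y x) A B n) (hB.isDist x)
    (fun _ => hmmLaw_isDist hA hB n (hA.isDist x)) ⟨C, fun z => hC _⟩

theorem kerApp_eq (A : ℕ → ℕ → ℝ) (ξ : ℕ → ℝ) :
    kerApp A ξ = fun y => ∑' x, ξ x * A y x := by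
  funext y
  exact tsum_congr fun x => mul_comm _ _

theorem kerApp_isDist {A : ℕ → ℕ → ℝ} (hA : IsKernel A) {ξ : ℕ → ℝ} (hξ : IsDist ξ) :
    IsDist (kerApp A ξ) := by
  rw [kerApp_eq]
  exact mix_isDist hξ (K := fun x y => A y x) hA.isDist

theorem kerIter_isDist {A : ℕ → ℕ → ℝ} (hA : IsKernel A) {ξ : ℕ → ℝ} (hξ : IsDist ξ) (s : ℕ) :
    IsDist (kerIter A s ξ) := by
  induction s with
  | zero => exact hξ
  | succ s ih => exact kerApp_isDist hA ih

theorem kerIter_kerApp (A : ℕ → ℕ → ℝ) (ξ : ℕ → ℝ) (s : ℕ) :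
    kerIter A s (kerApp A ξ) = kerIter A (s + 1) ξ := by
  induction s with
  | zero => rfl
  | succ s ih =>
    show kerApp A (kerIter A s (kerApp A ξ)) = _
    rw [ih]
    rfl

theorem dirac_isDist (x : ℕ) : IsDist (dirac x) :=
  ⟨fun y => by unfold dirac; split_ifs <;> norm_num, hasSum_ite_eq x 1⟩

theorem kerApp_dirac (A : ℕ → ℕ → ℝ) (x : ℕ) : kerApp A (dirac x) = fun y => A y x := by
  funext y
  unfold kerApp dirac
  rw [tsum_eq_single x]
  · simp
  · intro z hz
    simp [hz]

/-- Averaging the law over the first kernel step. -/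
theorem hmm_expect_kerApp {ξ : ℕ → ℝ} {A B : ℕ → ℕ → ℝ} (hξ : IsDist ξ) (hA : IsKernel A)
    (hB : IsKernel B) (n : ℕ) {f : (Fin n → ℕ) → ℝ} (hf : Bdd f) :
    expect ξ (fun x => expect (hmmLaw (fun y => A y x) A B n) f) =
      expect (hmmLaw (kerApp A ξ) A B n) f := by
  cases n with
  | zero =>
    have h1 : ∀ p, expect (hmmLaw p A B 0) f = f default := by
      intro p
      unfold expect
      rw [tsum_eq_single default (fun b hb => absurd (Subsingleton.elim _ _) hb)]
      simp [hmmLaw, markovLaw]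
    simp only [h1]
    exact expect_const hξ _
  | succ n =>
    rw [hmm_expect_succ (kerApp_isDist hA hξ) hA hB n hf, kerApp_eq]
    have hb : ∃ C, ∀ x, |expect (fun y => B y x) (fun y =>
        expect (hmmLaw (fun y => A y x) A B n) (fun t => f (Fin.cons y t)))| ≤ C := by
      obtain ⟨C, hC⟩ := hf
      exact ⟨C, fun x => abs_expect_le (hB.isDist x) fun y =>
        abs_expect_le (hmmLaw_isDist hA hB n (hA.isDist x)) fun t => hC _⟩
    rw [mix_expect hξ (K := fun x y => A y x) hA.isDist hb]
    congr 1
    funext x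
    exact hmm_expect_succ (hA.isDist x) hA hB n hf

theorem tv_summable {α : Type*} {μ ν : α → ℝ} (hμ : IsDist μ) (hν : IsDist ν) :
    Summable (fun s => |μ s - ν s|) := (hμ.2.summable.sub hν.2.summable).abs

theorem tv_comm' {α : Type*} (μ ν : α → ℝ) : tv μ ν = tv ν μ := by
  unfold tv
  simp only [abs_sub_comm]

theorem tv_triangle {α : Type*} {μ ν π : α → ℝ} (hμ : IsDist μ) (hν : IsDist ν)
    (hπ : IsDist π) : tv μ ν ≤ tv μ π + tv ν π := by
  unfold tv
  rw [← mul_add, ← (tv_summable hμ hπ).tsum_add (tv_summable hν hπ)]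
  refine mul_le_mul_of_nonneg_left ?_ (by norm_num)
  refine (tv_summable hμ hν).tsum_le_tsum (fun s => ?_)
    ((tv_summable hμ hπ).add (tv_summable hν hπ))
  have := abs_sub_le (μ s) (π s) (ν s)
  rwa [abs_sub_comm (π s)] at this

theorem expect_sub_le_tv {α : Type*} {μ ν h : α → ℝ} (hμ : IsDist μ) (hν : IsDist ν)
    (h0 : ∀ a, 0 ≤ h a) (h1 : ∀ a, h a ≤ 1) : expect μ h - expect ν h ≤ tv μ ν := by
  have hb : Bdd h := ⟨1, fun a => abs_le.2 ⟨by linarith [h0 a], h1 a⟩⟩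
  have hb2 : Bdd (fun a => h a - 1 / 2) :=
    ⟨1 / 2, fun a => abs_le.2 ⟨by linarith [h0 a], by linarith [h1 a]⟩⟩
  have hc : Bdd (fun _ : α => (1 / 2 : ℝ)) := ⟨|1 / 2|, fun _ => le_rfl⟩
  have e1 := expect_sub hμ hb hc
  have e2 := expect_sub hν hb hc
  rw [expect_const hμ] at e1
  rw [expect_const hν] at e2
  have : expect μ h - expect ν h =
      expect μ (fun a => h a - 1 / 2) - expect ν (fun a => h a - 1 / 2) := by
    rw [e1, e2]; ring
  rw [this]
  unfold expect tv
  rw [← (hμ.summable_mul hb2).tsum_sub (hν.summable_mul hb2), ← tsum_mul_left]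
  refine ((hμ.summable_mul hb2).sub (hν.summable_mul hb2)).tsum_le_tsum (fun a => ?_)
    ((tv_summable hμ hν).mul_left _)
  rw [← sub_mul]
  calc (μ a - ν a) * (h a - 1 / 2) ≤ |(μ a - ν a) * (h a - 1 / 2)| := le_abs_self _
    _ = |h a - 1 / 2| * |μ a - ν a| := by rw [abs_mul, mul_comm]
    _ ≤ 1 / 2 * |μ a - ν a| := by
      refine mul_le_mul_of_nonneg_right ?_ (abs_nonneg _)
      exact abs_le.2 ⟨by linarith [h0 a], by linarith [h1 a]⟩

/-- 1-Lipschitz for the Hamming metric. -/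
def HLip {n : ℕ} (f : (Fin n → ℕ) → ℝ) : Prop :=
  ∀ x y, f x - f y ≤ (hammingDist x y : ℝ)

theorem hammingDist_cons {n : ℕ} (a b : ℕ) (s t : Fin n → ℕ) :
    hammingDist (Fin.cons a s : Fin (n + 1) → ℕ) (Fin.cons b t) =
      (if a ≠ b then 1 else 0) + hammingDist s t := by
  unfold hammingDist
  rw [Fin.card_filter_univ_succ]
  simp only [Fin.cons_zero, Fin.cons_succ]
  split_ifs <;> simp [add_comm]

theorem HLip.bdd {n : ℕ} {f : (Fin n → ℕ) → ℝ} (hf : HLip f) : Bdd f := by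
  refine ⟨|f 0| + n, fun x => ?_⟩
  have h1 := hf x 0
  have h2 := hf 0 x
  have h3 : (hammingDist x 0 : ℝ) ≤ n := by
    exact_mod_cast (hammingDist_le_card_fintype (x := x) (y := 0)).trans (by simp)
  rw [hammingDist_comm] at h2
  rw [abs_le]
  constructor
  · linarith [neg_abs_le (f 0)]
  · linarith [le_abs_self (f 0)]

theorem HLip.cons {n : ℕ} {f : (Fin (n + 1) → ℕ) → ℝ} (hf : HLip f) (y : ℕ) :
    HLip (fun t => f (Fin.cons y t)) := by
  intro s t
  have := hf (Fin.cons y s) (Fin.cons y t)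
  rw [hammingDist_cons] at this
  simpa using this

theorem HLip.head {n : ℕ} {f : (Fin (n + 1) → ℕ) → ℝ} (hf : HLip f) (a b : ℕ)
    (t : Fin n → ℕ) : f (Fin.cons a t) - f (Fin.cons b t) ≤ 1 := by
  have := hf (Fin.cons a t) (Fin.cons b t)
  rw [hammingDist_cons] at this
  refine this.trans ?_
  rw [hammingDist_self]
  split_ifs <;> norm_num

/-- Contraction of expectations of Lipschitz functions. -/
theorem hmm_contract {A B : ℕ → ℕ → ℝ} (hA : IsKernel A) (hB : IsKernel B) (n : ℕ) :
    ∀ {ξ ζ : ℕ → ℝ}, IsDist ξ → IsDist ζ → ∀ {f : (Fin n → ℕ) → ℝ}, HLip f →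
      expect (hmmLaw ξ A B n) f - expect (hmmLaw ζ A B n) f ≤
        ∑ s ∈ Finset.range n, tv (kerIter A s ξ) (kerIter A s ζ) := by
  induction n with
  | zero =>
    intro ξ ζ _ _ f _
    have h1 : ∀ p, expect (hmmLaw p A B 0) f = f default := by
      intro p
      unfold expect
      rw [tsum_eq_single default (fun b hb => absurd (Subsingleton.elim _ _) hb)]
      simp [hmmLaw, markovLaw]
    simp [h1]
  | succ n ih =>
    intro ξ ζ hξ hζ f hf
    have hbb : ∀ t : Fin n → ℕ, BddBelow (Set.range fun y : ℕ => f (Fin.cons y t)) := by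
      intro t
      refine ⟨f (Fin.cons 0 t) - 1, ?_⟩
      rintro _ ⟨y, rfl⟩
      have := hf.head 0 y t
      simp only
      linarith
    let g : (Fin n → ℕ) → ℝ := fun t => ⨅ y : ℕ, f (Fin.cons y t)
    have hg1 : ∀ y t, g t ≤ f (Fin.cons y t) := fun y t => ciInf_le (hbb t) y
    have hg2 : ∀ y t, f (Fin.cons y t) - g t ≤ 1 := by
      intro y t
      have : f (Fin.cons y t) - 1 ≤ g t := le_ciInf fun z => by linarith [hf.head y z t]
      linarith
    have hg : HLip g := by
      intro s t
      have : g s - hammingDist s t ≤ g t := le_ciInf fun z => by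
        have h1 := hf.cons z s t
        have h2 := hg1 z s
        simp only at h1
        linarith
      linarith
    have hD : ∀ x, IsDist (hmmLaw (fun y => A y x) A B n) :=
      fun x => hmmLaw_isDist hA hB n (hA.isDist x)
    let h : ℕ → ℝ := fun x => expect (fun y => B y x) (fun y =>
      expect (hmmLaw (fun y => A y x) A B n) (fun t => f (Fin.cons y t) - g t))
    have hB1 : ∀ y t, |f (Fin.cons y t) - g t| ≤ 1 := fun y t =>
      abs_le.2 ⟨by linarith [hg1 y t], hg2 y t⟩
    have hB2 : ∀ x y, |expect (hmmLaw (fun y => A y x) A B n)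
        (fun t => f (Fin.cons y t) - g t)| ≤ 1 :=
      fun x y => abs_expect_le (hD x) (hB1 y)
    have h0 : ∀ x, 0 ≤ h x := fun x => le_expect (hB.isDist x) ⟨1, hB2 x⟩ fun y =>
      le_expect (hD x) ⟨1, hB1 y⟩ fun t => by linarith [hg1 y t]
    have h1 : ∀ x, h x ≤ 1 := fun x => expect_le (hB.isDist x) ⟨1, hB2 x⟩ fun y =>
      expect_le (hD x) ⟨1, hB1 y⟩ fun t => hg2 y t
    have hbg := hg.bdd
    have key : ∀ {p : ℕ → ℝ}, IsDist p → expect (hmmLaw p A B (n + 1)) f =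
        expect p h + expect (hmmLaw (kerApp A p) A B n) g := by
      intro p hp
      rw [hmm_expect_succ hp hA hB n hf.bdd, ← hmm_expect_kerApp hp hA hB n hbg,
        ← expect_add hp ⟨1, fun x => abs_le.2 ⟨by linarith [h0 x], h1 x⟩⟩]
      · congr 1
        funext x
        show _ = expect _ _ + _
        rw [← expect_const (hB.isDist x) (expect (hmmLaw (fun y => A y x) A B n) g),
          ← expect_add (hB.isDist x) ⟨1, hB2 x⟩ ⟨_, fun _ => le_rfl⟩]
        congr 1
        funext y
        rw [← expect_add (hD x) ⟨1, hB1 y⟩ hbg]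
        congr 1
        funext t
        ring
      · obtain ⟨C, hC⟩ := hbg
        exact ⟨C, fun x => abs_expect_le (hD x) hC⟩
    rw [key hξ, key hζ, Finset.sum_range_succ']
    have i1 := expect_sub_le_tv hξ hζ h0 h1
    have i2 := ih (kerApp_isDist hA hξ) (kerApp_isDist hA hζ) hg
    simp only [kerIter_kerApp] at i2
    have i3 : tv (kerIter A 0 ξ) (kerIter A 0 ζ) = tv ξ ζ := rfl
    rw [i3]
    linarith

/-- MGF bound. -/
theorem hmm_mgf {A B : ℕ → ℕ → ℝ} {π : ℕ → ℝ} {G θ : ℝ} (hA : IsKernel A) (hB : IsKernel B)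
    (hge : IsGeomErgodic A π G θ) (t : ℝ) (n : ℕ) :
    ∀ {p : ℕ → ℝ}, IsDist p → ∀ {f : (Fin n → ℕ) → ℝ}, HLip f →
      expect (hmmLaw p A B n) (fun y => Real.exp (t * f y)) ≤
        Real.exp (t * expect (hmmLaw p A B n) f + n * (t ^ 2 * (2 * G / (1 - θ)) ^ 2 / 8)) := by
  obtain ⟨hG, hθ0, hθ1, hπ, _, hτ⟩ := hge
  induction n with
  | zero =>
    intro p _ f _
    have h1 : ∀ f : (Fin 0 → ℕ) → ℝ, expect (hmmLaw p A B 0) f = f default := by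
      intro f
      unfold expect
      rw [tsum_eq_single default (fun b hb => absurd (Subsingleton.elim _ _) hb)]
      simp [hmmLaw, markovLaw]
    simp [h1]
  | succ n ih =>
    intro p hp f hf
    have hD : ∀ x, IsDist (hmmLaw (fun y => A y x) A B n) :=
      fun x => hmmLaw_isDist hA hB n (hA.isDist x)
    obtain ⟨C, hC⟩ := hf.bdd
    have hexp : ∀ u, |u| ≤ C → |Real.exp (t * u)| ≤ Real.exp (|t| * C) := by
      intro u hu
      rw [abs_of_pos (Real.exp_pos _)]
      refine Real.exp_le_exp.2 ((le_abs_self _).trans ?_)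
      rw [abs_mul]
      exact mul_le_mul_of_nonneg_left hu (abs_nonneg _)
    let m : ℕ × ℕ → ℝ := fun z =>
      expect (hmmLaw (fun y => A y z.1) A B n) (fun s => f (Fin.cons z.2 s))
    have hmC : ∀ z, |m z| ≤ C := fun z => abs_expect_le (hD z.1) fun s => hC _
    have hq : IsDist (fun z : ℕ × ℕ => p z.1 * B z.2 z.1) :=
      joint_isDist hp (K := fun x y => B y x) hB.isDist
    have hm : ∀ a b, m a - m b ≤ 2 * G / (1 - θ) := by
      rintro ⟨x, y⟩ ⟨x', y'⟩
      have e1 := hmm_contract hA hB n (hA.isDist x) (hA.isDist x') (hf.cons y)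
      have e2 : expect (hmmLaw (fun y => A y x') A B n) (fun s => f (Fin.cons y s)) -
          m (x', y') ≤ 1 := by
        rw [← expect_sub (hD x') ⟨C, fun s => hC _⟩ ⟨C, fun s => hC _⟩]
        refine expect_le (hD x') ⟨1, fun s => ?_⟩ fun s => hf.head _ _ _
        rw [abs_le]
        constructor
        · linarith [hf.head y' y s]
        · exact hf.head _ _ _
      have e3 : ∀ s ∈ Finset.range n,
          tv (kerIter A s (fun y => A y x)) (kerIter A s (fun y => A y x')) ≤
            2 * G * θ ^ (s + 1) := by
        intro s _
        rw [← kerApp_dirac, ← kerApp_dirac, kerIter_kerApp, kerIter_kerApp]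
        have := tv_triangle (kerIter_isDist hA (dirac_isDist x) (s + 1))
          (kerIter_isDist hA (dirac_isDist x') (s + 1)) hπ.isDist
        linarith [hτ (s + 1) x, hτ (s + 1) x']
      have e4 := Finset.sum_le_sum e3
      have e5 : 1 + ∑ s ∈ Finset.range n, 2 * G * θ ^ (s + 1) ≤
          2 * G * ∑ s ∈ Finset.range (n + 1), θ ^ s := by
        rw [Finset.sum_range_succ', mul_add, ← Finset.mul_sum]
        linarith
      have e6 : ∑ s ∈ Finset.range (n + 1), θ ^ s ≤ (1 - θ)⁻¹ := by
        rw [← tsum_geometric_of_lt_one hθ0 hθ1]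
        exact (summable_geometric_of_lt_one hθ0 hθ1).sum_le_tsum _
          fun i _ => pow_nonneg hθ0 i
      have e7 := mul_le_mul_of_nonneg_left e6 (show 0 ≤ 2 * G by linarith)
      rw [div_eq_mul_inv]
      have e8 : m (x, y) =
        expect (hmmLaw (fun y => A y x) A B n) (fun s => f (Fin.cons y s)) := rfl
      rw [e8]
      linarith
    have hE : expect (hmmLaw p A B (n + 1)) f =
        expect (fun z : ℕ × ℕ => p z.1 * B z.2 z.1) m := by
      rw [hmm_expect_succ hp hA hB n ⟨C, hC⟩,
        joint_expect hp (K := fun x y => B y x) hB.isDist ⟨C, hmC⟩]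
    have hI : ∀ z : ℕ × ℕ, |expect (hmmLaw (fun y => A y z.1) A B n)
        (fun s => Real.exp (t * f (Fin.cons z.2 s)))| ≤ Real.exp (|t| * C) :=
      fun z => abs_expect_le (hD z.1) fun s => hexp _ (hC _)
    have hE2 : expect (hmmLaw p A B (n + 1)) (fun y => Real.exp (t * f y)) =
        expect (fun z : ℕ × ℕ => p z.1 * B z.2 z.1) (fun z =>
          expect (hmmLaw (fun y => A y z.1) A B n)
            (fun s => Real.exp (t * f (Fin.cons z.2 s)))) := by
      rw [hmm_expect_succ hp hA hB n ⟨_, fun y => hexp _ (hC y)⟩,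
        joint_expect hp (K := fun x y => B y x) hB.isDist ⟨_, hI⟩]
    set κ := t ^ 2 * (2 * G / (1 - θ)) ^ 2 / 8 with hκ
    have hstep : expect (hmmLaw p A B (n + 1)) (fun y => Real.exp (t * f y)) ≤
        expect (fun z : ℕ × ℕ => p z.1 * B z.2 z.1) (fun z => Real.exp (t * m z)) *
          Real.exp (n * κ) := by
      rw [hE2, ← expect_mul_const]
      refine expect_mono hq ⟨_, hI⟩ ⟨Real.exp (|t| * C) * Real.exp (n * κ), fun z => ?_⟩
        fun z => ?_
      · rw [abs_mul, abs_of_pos (Real.exp_pos (n * κ))]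
        exact mul_le_mul_of_nonneg_right (hexp _ (hmC z)) (Real.exp_pos _).le
      · rw [← Real.exp_add]
        exact ih (hA.isDist z.1) (hf.cons z.2)
    refine hstep.trans ?_
    have hH := hoeffding_discrete hq hm t
    refine (mul_le_mul_of_nonneg_right hH (Real.exp_pos _).le).trans ?_
    rw [← Real.exp_add, hE]
    refine Real.exp_le_exp.2 (le_of_eq ?_)
    rw [hκ]
    push_cast
    ring

theorem hmm_tail {A B : ℕ → ℕ → ℝ} {p π : ℕ → ℝ} {G θ : ℝ} (hp : IsDist p)
    (hA : IsKernel A) (hB : IsKernel B)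
    (hge : IsGeomErgodic A π G θ) (n : ℕ) {f : (Fin n → ℕ) → ℝ} (hf : HLip f)
    {ε : ℝ} (hε : 0 < ε) :
    prob (hmmLaw p A B n) {y | f y - expect (hmmLaw p A B n) f > n * ε}
        ≤ Real.exp (-(n * (1 - θ) ^ 2 * ε ^ 2) / (2 * G ^ 2)) := by
  have hG : 0 < G := lt_of_lt_of_le one_pos hge.1
  have hθ : 0 < 1 - θ := by linarith [hge.2.2.1]
  have hD := hmmLaw_isDist hA hB n hp
  set E := expect (hmmLaw p A B n) f with hEdef
  let c := 2 * G / (1 - θ)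
  have hc : 0 < c := by positivity
  let t := 4 * ε / c ^ 2
  have ht : 0 < t := by positivity
  obtain ⟨C, hC⟩ := hf.bdd
  have hbe : Bdd (fun y => Real.exp (t * f y)) := by
    refine ⟨Real.exp (t * C), fun y => ?_⟩
    rw [abs_of_pos (Real.exp_pos _)]
    exact Real.exp_le_exp.2 (mul_le_mul_of_nonneg_left ((le_abs_self _).trans (hC y)) ht.le)
  have h1 : prob (hmmLaw p A B n) {y | f y - E > n * ε} ≤
      expect (hmmLaw p A B n) (fun y => Real.exp (t * f y)) *
        Real.exp (-(t * E) - t * (n * ε)) := by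
    unfold prob expect
    rw [tsum_subtype, ← tsum_mul_right]
    refine (hD.2.summable.indicator _).tsum_le_tsum (fun y => ?_)
      ((hD.summable_mul hbe).mul_right _)
    rw [mul_assoc, ← Real.exp_add]
    by_cases hy : y ∈ {y | f y - E > n * ε}
    · rw [Set.indicator_of_mem hy]
      refine le_mul_of_one_le_right (hD.1 y) (Real.one_le_exp ?_)
      have : t * (n * ε) ≤ t * (f y - E) := mul_le_mul_of_nonneg_left (le_of_lt hy) ht.le
      linarith
    · rw [Set.indicator_of_notMem hy]
      exact mul_nonneg (hD.1 y) (Real.exp_pos _).le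
  refine h1.trans ?_
  refine (mul_le_mul_of_nonneg_right (hmm_mgf hA hB hge t n hp hf) (Real.exp_pos _).le).trans ?_
  rw [← Real.exp_add, ← hEdef]
  refine Real.exp_le_exp.2 (le_of_eq ?_)
  simp only [t, c]
  field_simp
  ring

/-- **Theorem 1 (main concentration inequality).** If `Y₁,…,Yₙ` is a hidden Markov chain whose
underlying Markov chain is `(G,θ)`-geometrically ergodic, then for every `f : ℕⁿ → ℝ` that is
1-Lipschitz w.r.t. the Hamming metric and every `ε > 0`, both tails
`f − 𝔼f > nε` and `𝔼f − f > nε` have probability at most `exp(−n(1−θ)²ε²/(2G²))`. -/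
theorem main_concentration (G θ : ℝ) (p₁ π : ℕ → ℝ) (A B : ℕ → ℕ → ℝ)
    (hp₁ : IsStochastic p₁) (hA : IsKernel A) (hB : IsKernel B)
    (hge : IsGeomErgodic A π G θ)
    (n : ℕ) (f : (Fin n → ℕ) → ℝ)
    (hf : ∀ x y : Fin n → ℕ, |f x - f y| ≤ (hammingDist x y : ℝ))
    (ε : ℝ) (hε : 0 < ε) :
    prob (hmmLaw p₁ A B n) {y | f y - expect (hmmLaw p₁ A B n) f > n * ε}
        ≤ Real.exp (-(n * (1 - θ) ^ 2 * ε ^ 2) / (2 * G ^ 2)) ∧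
    prob (hmmLaw p₁ A B n) {y | expect (hmmLaw p₁ A B n) f - f y > n * ε}
        ≤ Real.exp (-(n * (1 - θ) ^ 2 * ε ^ 2) / (2 * G ^ 2)) := by
  have hf' : HLip f := fun x y => (le_abs_self _).trans (hf x y)
  have hf'' : HLip (fun y => - f y) := fun x y => by
    have := hf' y x
    rw [hammingDist_comm] at this
    simp only
    linarith
  refine ⟨hmm_tail hp₁.isDist hA hB hge n hf' hε, ?_⟩
  have h := hmm_tail hp₁.isDist hA hB hge n hf'' hε
  rw [expect_neg] at h
  have hs : {y | expect (hmmLaw p₁ A B n) f - f y > n * ε} =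
      {y | -f y - -expect (hmmLaw p₁ A B n) f > n * ε} := by
    ext y
    simp only [Set.mem_ofPred_eq]
    rw [show -f y - -expect (hmmLaw p₁ A B n) f = expect (hmmLaw p₁ A B n) f - f y by ring]
  rw [hs]
  exact h

end
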